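/- If V is a ℋ-submodule of M(α) with |α| = n whose first nonzero degree is d, then for all m ≥ d, dim V_m ≥ C(m − d + n, n); consequently dim V_m, which is also bounded above by C(m, n), is eventually a polynomial of degree n in m with leading coefficient 1/n!. -/

import Mathlib

/-- The data of a sequence of `H_m(0)`-modules with transition maps: a `k`-vector
space `V m` for each `m`, operators `T m i` (the action of the 0-Hecke generator
`π_i ∈ H_m(0)`, meaningful for `1 ≤ i ≤ m - 1`), and `H_m(0)`-equivariant transition
maps `φ m : V m → V (m+1)`. -/
structure HSeq (k : Type) [Field k] where
  V : ℕ → Type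
  [acg : ∀ m, AddCommGroup (V m)]
  [mod : ∀ m, Module k (V m)]
  T : ∀ m, ℕ → V m →ₗ[k] V m
  φ : ∀ m, V m →ₗ[k] V (m + 1)

attribute [instance] HSeq.acg HSeq.mod

variable {k : Type} [Field k]

/-- The composite transition map `V n → V m` for `n ≤ m`. -/
def HSeq.transit (X : HSeq k) {n m : ℕ} (h : n ≤ m) (v : X.V n) : X.V m :=
  Nat.leRecOn h (fun {j} w => X.φ j w) v

/-- `X` is a `ℋ`-module: the `T m i` satisfy the 0-Hecke relations, the transition
maps are equivariant, and (the `ℋ`-module criterion) every element in the image of a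
composite transition map `V n → V m` is fixed by `π_j` for `n + 1 ≤ j ≤ m - 1`. -/
def HSeq.IsHModule (X : HSeq k) : Prop :=
  (∀ m i, 1 ≤ i → i + 1 ≤ m → (X.T m i).comp (X.T m i) = X.T m i) ∧
  (∀ m i, 1 ≤ i → i + 2 ≤ m →
    (X.T m i).comp ((X.T m (i + 1)).comp (X.T m i)) =
      (X.T m (i + 1)).comp ((X.T m i).comp (X.T m (i + 1)))) ∧
  (∀ m i j, 1 ≤ i → i + 1 < j → j + 1 ≤ m →
    (X.T m i).comp (X.T m j) = (X.T m j).comp (X.T m i)) ∧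
  (∀ m i, 1 ≤ i → i + 1 ≤ m → (X.T (m + 1) i).comp (X.φ m) = (X.φ m).comp (X.T m i)) ∧
  (∀ n m (h : n ≤ m) j, n + 1 ≤ j → j + 1 ≤ m →
    ∀ v : X.V n, X.T m j (X.transit h v) = X.transit h v)

/-- A `ℋ`-submodule of `X`: a family of subspaces closed under the 0-Hecke operators
and the transition maps. -/
def HSeq.IsSub (X : HSeq k) (W : ∀ m, Submodule k (X.V m)) : Prop :=
  (∀ m i, 1 ≤ i → i + 1 ≤ m → ∀ v ∈ W m, X.T m i v ∈ W m) ∧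
  (∀ m, ∀ v ∈ W m, X.φ m v ∈ W (m + 1))

/-- The descent set `D(α)` of a composition `α`. -/
def compDescents {n : ℕ} (α : Composition n) : Finset ℕ :=
  (Finset.range (α.length - 1)).image fun i => (α.blocks.take (i + 1)).sum

/-- `X`, with generator `v ∈ X.V n`, is the induced `ℋ`-module `M(α)` for `α ⊨ n`:
`X` is a `ℋ`-module, `H_n(0)` acts on `v` through the simple module `C_α`, and `(X, v)`
satisfies the universal property of the induced module: for any `ℋ`-module `Y` and
vector `w ∈ Y.V n` on which `H_n(0)` acts through `C_α`, there is a unique morphism of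
`ℋ`-modules `X → Y` sending `v` to `w`. -/
def IsInducedModule (n : ℕ) (α : Composition n) (X : HSeq k) (v : X.V n) : Prop :=
  X.IsHModule ∧
  (∀ i, 1 ≤ i → i + 1 ≤ n →
    X.T n i v = (if i ∈ compDescents α then (0 : k) else 1) • v) ∧
  ∀ (Y : HSeq k), Y.IsHModule → ∀ w : Y.V n,
    (∀ i, 1 ≤ i → i + 1 ≤ n →
      Y.T n i w = (if i ∈ compDescents α then (0 : k) else 1) • w) →
    ∃! f : ∀ m, X.V m →ₗ[k] Y.V m,
      f n v = w ∧
      (∀ m i, 1 ≤ i → i + 1 ≤ m → (Y.T m i).comp (f m) = (f m).comp (X.T m i)) ∧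
      (∀ m, (Y.φ m).comp (f m) = (f (m + 1)).comp (X.φ m))

/-!
`M(α)` has a model whose `m`-th space has as basis the `n`-subsets of `[m]`, read as `n` particles
on `m` sites: `π_i` moves a particle from `i` to the empty site `i + 1` and fixes every other
configuration, except that it kills one in which `i` and `i + 1` hold two consecutive particles
whose position is a descent of `α`. The transition maps become inclusions. Order subsets
colexicographically. Applying `π_m, π_{m-1}, …, π_p` to a vector of `V_m ⊆ V_{m+1}` inserts an empty
site at `p`, which is monotone for the order, so the leading sets of the spaces `V_m` are closed
under inserting empty sites. In terms of the vector of lengths of the `n + 1` gaps between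
particles, the leading sets form an upper set in `ℕ^(n+1)`, and `dim V_m` is the number of its
points of degree `m - n`. An upper set containing a point of degree `d - n` has at least
`C(m - d + n, n)` points of degree `m - n`; by Dickson's lemma the count is eventually polynomial,
and the polynomial is squeezed between `C(m - d + n, n)` and `C(m, n)`.
-/

section Squeeze

open Polynomial Filter Topology

variable {K : Type*} [NormedField K] [LinearOrder K] [IsStrictOrderedRing K] [OrderTopology K]
  [Archimedean K]

lemma degree_le_degree_of_eventually_abs_eval_natCast_le {p q : K[X]}
    (h : ∀ᶠ m : ℕ in atTop, |p.eval (m : K)| ≤ |q.eval (m : K)|) : p.degree ≤ q.degree := by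
  by_contra! hlt
  have hp : p ≠ 0 := ne_zero_of_degree_gt hlt
  have hratio := (div_tendsto_atTop_zero_of_degree_lt q p hlt).comp
    (tendsto_natCast_atTop_atTop (R := K))
  have hroot := (tendsto_natCast_atTop_atTop (R := K)).eventually (eventually_atTop_not_isRoot p hp)
  have hsmall := hratio.eventually (Ioo_mem_nhds (neg_one_lt_zero (R := K)) one_pos)
  obtain ⟨m, hm, hne, hlow, hupp⟩ := (h.and (hroot.and hsmall)).exists
  have habs : |q.eval (m : K) / p.eval (m : K)| < 1 := abs_lt.2 ⟨hlow, hupp⟩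
  rw [abs_div, div_lt_one (abs_pos.2 hne)] at habs
  exact absurd hm (not_le.2 habs)

lemma degree_eq_and_leadingCoeff_eq_of_eventually_le_of_le {p q₁ q₂ : K[X]} (hq₂ : q₂ ≠ 0)
    (hdeg : q₂.degree = q₁.degree) (hlead : q₂.leadingCoeff = q₁.leadingCoeff)
    (h₁ : ∀ᶠ m : ℕ in atTop, q₁.eval (m : K) ≤ p.eval (m : K))
    (h₂ : ∀ᶠ m : ℕ in atTop, p.eval (m : K) ≤ q₂.eval (m : K)) :
    p.degree = q₂.degree ∧ p.leadingCoeff = q₂.leadingCoeff := by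
  have hle : (q₂ - p).degree ≤ (q₂ - q₁).degree := by
    refine degree_le_degree_of_eventually_abs_eval_natCast_le ?_
    filter_upwards [h₁, h₂] with m hm₁ hm₂
    rw [eval_sub, eval_sub, abs_of_nonneg (by linarith), abs_of_nonneg (by linarith)]
    linarith
  have hlt : (q₂ - p).degree < q₂.degree := hle.trans_lt (degree_sub_lt_left hdeg hq₂ hlead)
  rw [← sub_sub_cancel q₂ p]
  exact ⟨degree_sub_eq_left_of_degree_lt hlt, leadingCoeff_sub_of_degree_lt hlt⟩

lemma natDegree_eq_and_leadingCoeff_eq_of_choose_le_of_le_choose {p : K[X]} {n d : ℕ}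
    (h₁ : ∀ᶠ m : ℕ in atTop, ((m - d + n).choose n : K) ≤ p.eval (m : K))
    (h₂ : ∀ᶠ m : ℕ in atTop, p.eval (m : K) ≤ (m.choose n : K)) :
    p.natDegree = n ∧ p.leadingCoeff = 1 / (n.factorial : K) := by
  have hne (e : ℕ) : preHilbertPoly K n e ≠ 0 := fun h => by
    have := leadingCoeff_preHilbertPoly K n e
    rw [h, leadingCoeff_zero] at this
    exact inv_ne_zero (Nat.cast_ne_zero.2 n.factorial_ne_zero) this.symm
  have hdegree (e : ℕ) : (preHilbertPoly K n e).degree = n := by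
    rw [degree_eq_natDegree (hne e), natDegree_preHilbertPoly]
  obtain ⟨hdeg, hlead⟩ := degree_eq_and_leadingCoeff_eq_of_eventually_le_of_le
    (p := p) (q₁ := preHilbertPoly K n d) (q₂ := preHilbertPoly K n n) (hne n)
    (by rw [hdegree, hdegree])
    (by rw [leadingCoeff_preHilbertPoly, leadingCoeff_preHilbertPoly])
    (by
      filter_upwards [h₁, eventually_ge_atTop d] with m hm hdm
      rwa [preHilbertPoly_eq_choose_sub_add K n hdm])
    (by
      filter_upwards [h₂, eventually_ge_atTop n] with m hm hnm
      rwa [preHilbertPoly_eq_choose_sub_add K n hnm, Nat.sub_add_cancel hnm])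
  rw [one_div, hlead, leadingCoeff_preHilbertPoly]
  exact ⟨natDegree_eq_of_degree_eq_some (hdeg.trans (hdegree n)), rfl⟩

end Squeeze

section UpperSets

open Finset Polynomial Filter

lemma exists_finset_upperClosure_eq_of_isUpperSet {α : Type*} [PartialOrder α]
    [WellQuasiOrderedLE α] {U : Set α} (hU : IsUpperSet U) :
    ∃ G : Finset α, (upperClosure (G : Set α) : Set α) = U := by
  have hfin : {x | Minimal (· ∈ U) x}.Finite :=
    WellQuasiOrderedLE.finite_of_isAntichain (setOfPred_minimal_antichain _)
  refine ⟨hfin.toFinset, Set.ext fun x => ?_⟩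
  simp only [SetLike.mem_coe, mem_upperClosure, Set.Finite.coe_toFinset, Set.mem_ofPred_eq]
  constructor
  · rintro ⟨b, hb, hbx⟩
    exact hU hbx hb.prop
  · intro hx
    obtain ⟨b, hbx, hb⟩ := (Set.isPWO_of_wellQuasiOrderedLE U).exists_le_minimal hx
    exact ⟨b, hb, hbx⟩

lemma isUpperSet_of_add_single_mem {ι : Type*} [Finite ι] [DecidableEq ι] {U : Set (ι → ℕ)}
    (h : ∀ a ∈ U, ∀ i, a + Pi.single i 1 ∈ U) : IsUpperSet U := by
  intro x y hxy hx
  suffices ∀ z : ι → ℕ, ∀ x ∈ U, x + z ∈ U by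
    simpa [add_tsub_cancel_of_le hxy] using this (y - x) x hx
  intro z
  induction z using Pi.single_induction with
  | zero => simp
  | add f g hf hg => exact fun x hx => add_assoc x f g ▸ hg _ (hf x hx)
  | single i m =>
    induction m with
    | zero => simp
    | succ m ih =>
      intro x hx
      rw [Pi.single_add, ← add_assoc]
      exact h _ (ih x hx) i

variable {ι : Type*} [Fintype ι] [DecidableEq ι]

open scoped Classical in
/-- The number of elements of total degree `D` in `U`; for an upper set `U` this is the Hilbert
function of the monomial ideal with exponents in `U`. -/
noncomputable def degreeCount (U : Set (ι → ℕ)) (D : ℕ) : ℕ :=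
  #{x ∈ piAntidiag univ D | x ∈ U}

lemma card_piAntidiag_univ (D : ℕ) :
    #(piAntidiag (univ : Finset ι) D) = (Fintype.card ι).multichoose D := by
  rw [← Sym.card_sym_eq_multichoose, ← Nat.card_eq_fintype_card,
    Nat.card_congr (Sym.equivNatSumOfFintype ι D), ← Nat.card_eq_finsetCard]
  exact Nat.card_congr (Equiv.subtypeEquivRight fun x => by simp)

lemma multichoose_succ_eq_choose (n D : ℕ) : (n + 1).multichoose D = (D + n).choose n := by
  rw [Nat.multichoose_eq, ← Nat.choose_symm_add]
  congr 1
  omega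

lemma degreeCount_mono {U V : Set (ι → ℕ)} (h : U ⊆ V) (D : ℕ) :
    degreeCount U D ≤ degreeCount V D := by
  classical
  exact card_le_card (monotone_filter_right _ fun _ _ hx => h hx)

lemma degreeCount_Ici {b : ι → ℕ} {D : ℕ} (hD : ∑ i, b i ≤ D) :
    degreeCount (Set.Ici b) D = (Fintype.card ι).multichoose (D - ∑ i, b i) := by
  rw [← card_piAntidiag_univ, degreeCount]
  refine (card_bij (fun x _ => b + x) ?_ (fun _ _ _ _ => add_left_cancel) ?_).symm
  · intro x hx
    simp_all [sum_add_distrib]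
  · intro y hy
    simp only [mem_filter, mem_piAntidiag, mem_univ, implies_true, and_true, Set.mem_Ici] at hy ⊢
    refine ⟨y - b, ?_, add_tsub_cancel_of_le hy.2⟩
    rw [← hy.1, ← sum_tsub_distrib _ fun i _ => hy.2 i]
    rfl

lemma multichoose_le_degreeCount {U : Set (ι → ℕ)} (hU : IsUpperSet U) {b : ι → ℕ}
    (hb : b ∈ U) {D : ℕ} (hD : ∑ i, b i ≤ D) :
    (Fintype.card ι).multichoose (D - ∑ i, b i) ≤ degreeCount U D :=
  degreeCount_Ici hD ▸ degreeCount_mono (hU.Ici_subset hb) D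

lemma degreeCount_upperClosure (G : Finset (ι → ℕ)) {D : ℕ} (hD : ∑ i, G.sup id i ≤ D) :
    (degreeCount ((upperClosure (G : Set (ι → ℕ)) : UpperSet _) : Set (ι → ℕ)) D : ℤ) =
      ∑ t ∈ G.powerset with t.Nonempty,
        (-1) ^ (#t + 1) * ((Fintype.card ι).multichoose (D - ∑ i, t.sup id i) : ℤ) := by
  classical
  let above : (ι → ℕ) → Finset (ι → ℕ) := fun b => {x ∈ piAntidiag univ D | b ≤ x}
  have hunion : degreeCount ((upperClosure (G : Set (ι → ℕ)) : UpperSet _) : Set (ι → ℕ)) D =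
      #(G.biUnion above) := by
    rw [degreeCount]
    congr 1
    ext x
    simp only [mem_filter, SetLike.mem_coe, mem_upperClosure, mem_biUnion, above]
    tauto
  rw [hunion, inclusion_exclusion_card_biUnion]
  conv_rhs => rw [← sum_coe_sort]
  refine Fintype.sum_congr _ _ fun ⟨t, ht⟩ => ?_
  obtain ⟨hsub, hne⟩ : t ⊆ G ∧ t.Nonempty := by simpa using ht
  have hinf : t.inf' hne above = {x ∈ piAntidiag (univ : Finset ι) D | t.sup id ≤ x} := by
    ext x
    simp only [mem_inf', mem_filter, Finset.sup_le_iff, id, above]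
    exact ⟨fun h => ⟨(h _ hne.choose_spec).1, fun b hb => (h b hb).2⟩,
      fun h b hb => ⟨h.1, h.2 b hb⟩⟩
  have hsum : ∑ i, t.sup id i ≤ D := (sum_le_sum fun i _ => sup_mono (f := id) hsub i).trans hD
  rw [hinf, ← degreeCount_Ici hsum, degreeCount]
  congr!

lemma exists_polynomial_degreeCount [Nonempty ι] {U : Set (ι → ℕ)} (hU : IsUpperSet U) :
    ∃ p : ℚ[X], ∀ᶠ D : ℕ in atTop, (degreeCount U D : ℚ) = p.eval (D : ℚ) := by
  obtain ⟨G, rfl⟩ := exists_finset_upperClosure_eq_of_isUpperSet hU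
  obtain ⟨d, hd⟩ := Nat.exists_eq_succ_of_ne_zero (Fintype.card_ne_zero (α := ι))
  refine ⟨∑ t ∈ G.powerset with t.Nonempty,
    (-1) ^ (#t + 1) * preHilbertPoly ℚ d (∑ i, t.sup id i), ?_⟩
  filter_upwards [eventually_ge_atTop (∑ i, G.sup id i)] with D hD
  rw [← Int.cast_natCast, degreeCount_upperClosure G hD, eval_finsetSum, Int.cast_sum]
  refine sum_congr rfl fun t ht => ?_
  have hsub : t ⊆ G := mem_powerset.1 (mem_filter.1 ht).1
  have hsum : ∑ i, t.sup id i ≤ D := (sum_le_sum fun i _ => sup_mono (f := id) hsub i).trans hD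
  rw [eval_mul, preHilbertPoly_eq_choose_sub_add _ _ hsum, hd, multichoose_succ_eq_choose]
  simp

end UpperSets

section GapVectors

open Finset

variable {n : ℕ}

/-- The sum of the first `t` entries of a gap vector. -/
def gapSum (a : Fin (n + 1) → ℕ) (t : ℕ) : ℕ := ∑ i ∈ {i : Fin (n + 1) | (i : ℕ) < t}, a i

/-- The `j`-th element, counted from `0`, of `gapSet a`. -/
def gapPos (a : Fin (n + 1) → ℕ) (j : ℕ) : ℕ := gapSum a (j + 1) + j + 1

/-- The `n`-subset of the positive integers with gap vector `a`: there are `a 0` integers in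
`[1, ∞)` before its first element, `a 1` between the first and the second, and so on. The entry
`a n` counts the integers after the last element in the ambient interval `[1, ∑ i, a i + n]`. -/
def gapSet (a : Fin (n + 1) → ℕ) : Finset ℕ := (range n).image (gapPos a)

lemma gapSum_succ_last (a : Fin (n + 1) → ℕ) : gapSum a (n + 1) = ∑ i, a i := by
  rw [gapSum, filter_true_of_mem fun i _ => i.2]

lemma gapSum_succ (a : Fin (n + 1) → ℕ) (i : Fin (n + 1)) :
    gapSum a (i + 1) = gapSum a i + a i := by
  have hfilter : filter (fun j : Fin (n + 1) => (j : ℕ) < i + 1) univ =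
      insert i (filter (fun j : Fin (n + 1) => (j : ℕ) < i) univ) := by
    ext j
    simp only [mem_filter_univ, mem_insert, Fin.ext_iff]
    omega
  rw [gapSum, hfilter, sum_insert (by simp), add_comm, gapSum]

lemma gapSum_mono (a : Fin (n + 1) → ℕ) : Monotone (gapSum a) := fun _ _ h =>
  sum_le_sum_of_subset (monotone_filter_right _ fun _ _ hi => hi.trans_le h)

lemma gapSum_add_single (a : Fin (n + 1) → ℕ) (j : Fin (n + 1)) (t : ℕ) :
    gapSum (a + Pi.single j 1) t = gapSum a t + if (j : ℕ) < t then 1 else 0 := by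
  simp [gapSum, sum_add_distrib]

lemma gapPos_strictMono (a : Fin (n + 1) → ℕ) : StrictMono (gapPos a) := by
  intro i j h
  have := gapSum_mono a (show i + 1 ≤ j + 1 by omega)
  simp only [gapPos]
  omega

lemma card_gapSet (a : Fin (n + 1) → ℕ) : #(gapSet a) = n := by
  rw [gapSet, card_image_of_injective _ (gapPos_strictMono a).injective, card_range]

lemma gapSet_subset_Icc (a : Fin (n + 1) → ℕ) : gapSet a ⊆ Icc 1 (∑ i, a i + n) := by
  simp only [gapSet, image_subset_iff, mem_range, mem_Icc, gapPos]
  intro j hj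
  have := gapSum_mono a (show j + 1 ≤ n + 1 by omega)
  rw [gapSum_succ_last] at this
  omega

lemma gapSet_injOn (D : ℕ) :
    Set.InjOn (gapSet (n := n)) (piAntidiag univ D : Finset (Fin (n + 1) → ℕ)) := by
  intro a ha b hb hab
  replace ha := (mem_piAntidiag.1 ha).1
  replace hb := (mem_piAntidiag.1 hb).1
  have hemb : ∀ c : Fin (n + 1) → ℕ, gapSet c = gapSet a →
      (fun j : Fin n => gapPos c j) = (gapSet a).orderEmbOfFin (card_gapSet a) := fun c hc =>
    orderEmbOfFin_unique (card_gapSet a)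
      (fun j => hc ▸ mem_image_of_mem _ (mem_range.2 j.2)) fun _ _ hij => gapPos_strictMono c hij
  have hpos := (hemb a rfl).trans (hemb b hab.symm).symm
  have hsum : ∀ t ≤ n + 1, gapSum a t = gapSum b t := by
    rintro (_ | t) ht
    · simp [gapSum]
    obtain ht | rfl := Nat.lt_or_eq_of_le (Nat.le_of_succ_le_succ ht)
    · have := congrFun hpos ⟨t, ht⟩
      simp only [gapPos] at this
      omega
    · rw [gapSum_succ_last, gapSum_succ_last, ha, hb]
  funext i
  have h := hsum (i + 1) i.2
  rw [gapSum_succ, gapSum_succ, hsum i i.2.le] at h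
  exact Nat.add_left_cancel h

lemma image_gapSet_piAntidiag (n D : ℕ) :
    (piAntidiag univ D).image (gapSet (n := n)) = powersetCard n (Icc 1 (D + n)) := by
  refine eq_of_subset_of_card_le (fun S hS => ?_) ?_
  · obtain ⟨a, ha, rfl⟩ := mem_image.1 hS
    rw [mem_powersetCard, ← (mem_piAntidiag.1 ha).1]
    exact ⟨gapSet_subset_Icc a, card_gapSet a⟩
  · rw [card_image_of_injOn (gapSet_injOn D), card_piAntidiag_univ, Fintype.card_fin,
      multichoose_succ_eq_choose, card_powersetCard, Nat.card_Icc, Nat.add_sub_cancel]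

/-- The order-preserving injection `ℕ → ℕ` whose image misses exactly `p`. -/
def skip (p x : ℕ) : ℕ := if x < p then x else x + 1

lemma skip_strictMono (p : ℕ) : StrictMono (skip p) := by
  intro x y h
  simp only [skip]
  split_ifs <;> omega

lemma image_skip_gapSet (a : Fin (n + 1) → ℕ) (j : Fin (n + 1)) :
    (gapSet a).image (skip (gapSum a j + j + 1)) = gapSet (a + Pi.single j 1) := by
  rw [gapSet, image_image]
  refine image_congr fun i _ => ?_
  obtain h | h := Nat.lt_or_ge j (i + 1)
  · have := gapSum_mono a h.le
    have hle : gapSum a j + j + 1 ≤ gapPos a i := by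
      simp only [gapPos]
      omega
    rw [Function.comp_apply, skip, if_neg hle.not_gt, gapPos, gapPos, gapSum_add_single, if_pos h]
    omega
  · have := gapSum_mono a h
    have hlt : gapPos a i < gapSum a j + j + 1 := by
      simp only [gapPos]
      omega
    rw [Function.comp_apply, skip, if_pos hlt, gapPos, gapPos, gapSum_add_single, if_neg h.not_gt,
      add_zero]

end GapVectors

section LeadingTerms

open Finset Module

lemma finrank_inf_ker_add_one {K V : Type*} [Field K] [AddCommGroup V] [Module K V]
    {U : Submodule K V} [FiniteDimensional K U] {e : V →ₗ[K] K} (h : ¬ U ≤ LinearMap.ker e) :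
    finrank K ↥(U ⊓ LinearMap.ker e) + 1 = finrank K U := by
  have hne : e.domRestrict U ≠ 0 := fun h0 => h fun v hv => LinearMap.congr_fun h0 ⟨v, hv⟩
  rw [← Submodule.map_comap_subtype, Submodule.finrank_map_subtype_eq,
    ← LinearMap.ker_domRestrict]
  exact Module.Dual.finrank_ker_add_one_of_ne_zero hne

variable {K ι κ : Type*} [Field K] [LinearOrder κ]

/-- `a` is the leading index of some nonzero vector of `U`, the indices being compared through
`key`. -/
def IsLeadingIndex (key : ι → κ) (U : Submodule K (ι →₀ K)) (a : ι) : Prop :=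
  ∃ v ∈ U, v a ≠ 0 ∧ ∀ b, key a < key b → v b = 0

lemma isLeadingIndex_inf_ker_lapply {key : ι → κ} {U : Submodule K (ι →₀ K)} {a b : ι}
    (h : key b < key a) :
    IsLeadingIndex key (U ⊓ LinearMap.ker (Finsupp.lapply a)) b ↔ IsLeadingIndex key U b :=
  ⟨fun ⟨v, hv, hb⟩ => ⟨v, hv.1, hb⟩, fun ⟨v, hv, hb⟩ => ⟨v, ⟨hv, hb.2 a h⟩, hb⟩⟩

lemma isLeadingIndex_iff_not_le_ker_lapply {key : ι → κ} {s : Finset ι} {U : Submodule K (ι →₀ K)}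
    (hU : U ≤ Finsupp.supported K K (s : Set ι)) {a : ι} (hmax : ∀ b ∈ s, key b ≤ key a) :
    IsLeadingIndex key U a ↔ ¬ U ≤ LinearMap.ker (Finsupp.lapply a) := by
  refine ⟨fun ⟨v, hv, hva, _⟩ hle => hva (hle hv), fun hle => ?_⟩
  obtain ⟨v, hv, hva⟩ := SetLike.not_le_iff_exists.1 hle
  refine ⟨v, hv, hva, fun b hb => (Finsupp.mem_supported' K v).1 (hU hv) b fun hbs => ?_⟩
  exact (hmax b hbs).not_gt hb

open scoped Classical in
lemma finrank_eq_card_isLeadingIndex {key : ι → κ} (hkey : Function.Injective key) (s : Finset ι)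
    {U : Submodule K (ι →₀ K)} (hU : U ≤ Finsupp.supported K K (s : Set ι)) :
    finrank K U = #{a ∈ s | IsLeadingIndex key U a} := by
  induction s using Finset.induction_on_max_value key generalizing U with
  | empty =>
    rw [coe_empty, Finsupp.supported_empty, le_bot_iff] at hU
    rw [hU, finrank_bot, filter_empty, card_empty]
  | insert a s has hmax ih =>
    have : FiniteDimensional K (Finsupp.supported K K (↑(insert a s) : Set ι)) :=
      Module.Finite.equiv (Finsupp.supportedEquivFinsupp _).symm
    have : FiniteDimensional K U := Submodule.finiteDimensional_of_le hU
    set U₀ := U ⊓ LinearMap.ker (Finsupp.lapply a) with hU₀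
    have hU₀s : U₀ ≤ Finsupp.supported K K (s : Set ι) := fun v hv => by
      rw [Finsupp.mem_supported']
      intro b hb
      obtain rfl | hba := eq_or_ne b a
      · exact hv.2
      · refine (Finsupp.mem_supported' K v).1 (hU hv.1) b ?_
        rwa [coe_insert, Set.mem_insert_iff, or_iff_right hba]
    have hfilter : {b ∈ s | IsLeadingIndex key U₀ b} = {b ∈ s | IsLeadingIndex key U b} :=
      filter_congr fun b hb => isLeadingIndex_inf_ker_lapply <|
        (hmax b hb).lt_of_ne fun h => has (hkey h ▸ hb)
    have hlead : IsLeadingIndex key U a ↔ ¬ U ≤ LinearMap.ker (Finsupp.lapply a) :=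
      isLeadingIndex_iff_not_le_ker_lapply hU (by simpa using hmax)
    rw [filter_insert, ← hfilter]
    split_ifs with ha
    · rw [card_insert_of_notMem (by simp [has]), ← ih hU₀s, hU₀,
        finrank_inf_ker_add_one (hlead.1 ha)]
    · rw [← ih hU₀s, hU₀, inf_eq_left.2 (not_not.1 (mt hlead.2 ha))]

end LeadingTerms

section HoppingModel

open Finset

/-- The image of `S` under the transposition of `i` and `i + 1`. -/
def adjSwap (i : ℕ) (S : Finset ℕ) : Finset ℕ := S.map (Equiv.swap i (i + 1)).toEmbedding

lemma mem_adjSwap {i x : ℕ} {S : Finset ℕ} : x ∈ adjSwap i S ↔ Equiv.swap i (i + 1) x ∈ S := by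
  simp [adjSwap, mem_map_equiv]

lemma mem_adjSwap_left {i : ℕ} {S : Finset ℕ} : i ∈ adjSwap i S ↔ i + 1 ∈ S := by
  simp [mem_adjSwap]

lemma mem_adjSwap_right {i : ℕ} {S : Finset ℕ} : i + 1 ∈ adjSwap i S ↔ i ∈ S := by
  simp [mem_adjSwap]

lemma mem_adjSwap_of_ne {i x : ℕ} {S : Finset ℕ} (h : x ≠ i) (h' : x ≠ i + 1) :
    x ∈ adjSwap i S ↔ x ∈ S := by
  rw [mem_adjSwap, Equiv.swap_apply_of_ne_of_ne h h']

lemma card_adjSwap (i : ℕ) (S : Finset ℕ) : #(adjSwap i S) = #S := card_map _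

/-- The number of elements of `S` up to `i`, i.e. the position of `i` in `S` if `i ∈ S`. -/
def rankIn (i : ℕ) (S : Finset ℕ) : ℕ := #{x ∈ S | x ≤ i}

lemma rankIn_succ_of_notMem {i : ℕ} {S : Finset ℕ} (h : i + 1 ∉ S) :
    rankIn (i + 1) S = rankIn i S := by
  refine congrArg card (filter_congr fun x hx => ?_)
  have : x ≠ i + 1 := fun hxi => h (hxi ▸ hx)
  omega

lemma rankIn_adjSwap {l i : ℕ} (h : l ≠ i) (S : Finset ℕ) :
    rankIn l (adjSwap i S) = rankIn l S := by
  rw [rankIn, adjSwap, filter_map, card_map, rankIn]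
  refine congrArg card (filter_congr fun x _ => ?_)
  simp only [Function.comp_apply, Equiv.coe_toEmbedding, Equiv.swap_apply_def]
  split_ifs <;> omega

/-- The particle at `i`, if there is one, hops to `i + 1` if that site is free. -/
def hop (i : ℕ) (S : Finset ℕ) : Finset ℕ := if i ∈ S ∧ i + 1 ∉ S then adjSwap i S else S

lemma mem_hop_left {i : ℕ} {S : Finset ℕ} : i ∈ hop i S ↔ i ∈ S ∧ i + 1 ∈ S := by
  by_cases h : i ∈ S ∧ i + 1 ∉ S
  · simp [hop, h, mem_adjSwap_left]
  · rw [hop, if_neg h]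
    tauto

lemma mem_hop_right {i : ℕ} {S : Finset ℕ} : i + 1 ∈ hop i S ↔ i ∈ S ∨ i + 1 ∈ S := by
  by_cases h : i ∈ S ∧ i + 1 ∉ S
  · simp [hop, h, mem_adjSwap_right]
  · rw [hop, if_neg h]
    tauto

lemma mem_hop_of_ne {i x : ℕ} {S : Finset ℕ} (h : x ≠ i) (h' : x ≠ i + 1) :
    x ∈ hop i S ↔ x ∈ S := by
  rw [hop]
  split_ifs
  · exact mem_adjSwap_of_ne h h'
  · rfl

lemma mem_hop {i x : ℕ} {S : Finset ℕ} :
    x ∈ hop i S ↔ (x = i ∧ i ∈ S ∧ i + 1 ∈ S) ∨ (x = i + 1 ∧ (i ∈ S ∨ i + 1 ∈ S)) ∨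
      (x ≠ i ∧ x ≠ i + 1 ∧ x ∈ S) := by
  obtain rfl | h := eq_or_ne x i
  · simp [mem_hop_left]
  obtain rfl | h' := eq_or_ne x (i + 1)
  · simp [mem_hop_right]
  simp [mem_hop_of_ne h h', h, h']

lemma hop_of_not {i : ℕ} {S : Finset ℕ} (h : ¬(i ∈ S ∧ i + 1 ∉ S)) : hop i S = S := if_neg h

lemma card_hop (i : ℕ) (S : Finset ℕ) : #(hop i S) = #S := by
  rw [hop]
  split_ifs
  · exact card_adjSwap i S
  · rfl

lemma rankIn_hop {l i : ℕ} (h : l ≠ i) (S : Finset ℕ) : rankIn l (hop i S) = rankIn l S := by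
  rw [hop]
  split_ifs
  · exact rankIn_adjSwap h S
  · rfl

lemma hop_hop (i : ℕ) (S : Finset ℕ) : hop i (hop i S) = hop i S := by
  ext x
  simp only [mem_hop]
  grind

lemma hop_comm {i j : ℕ} (h : i + 1 < j) (S : Finset ℕ) : hop i (hop j S) = hop j (hop i S) := by
  have h₁ : i ∈ hop j S ↔ i ∈ S := mem_hop_of_ne (by omega) (by omega)
  have h₂ : i + 1 ∈ hop j S ↔ i + 1 ∈ S := mem_hop_of_ne (by omega) (by omega)
  have h₃ : j ∈ hop i S ↔ j ∈ S := mem_hop_of_ne (by omega) (by omega)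
  have h₄ : j + 1 ∈ hop i S ↔ j + 1 ∈ S := mem_hop_of_ne (by omega) (by omega)
  ext x
  rw [mem_hop, h₁, h₂, mem_hop, mem_hop (i := j) (S := hop i S), h₃, h₄, mem_hop]
  grind

lemma hop_braid (i : ℕ) (S : Finset ℕ) :
    hop i (hop (i + 1) (hop i S)) = hop (i + 1) (hop i (hop (i + 1) S)) := by
  ext x
  simp only [mem_hop]
  grind

variable (R : Type*) [CommSemiring R] (D : Finset ℕ)

/-- The scalar by which `π_i` acts at `S`: if the sites `i` and `i + 1` carry the `r`-th and
`(r + 1)`-st particles of `S`, then `π_i` acts as `π_r` does on the simple module with descent set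
`D`; otherwise it moves particles without introducing a scalar. -/
def hopCoeff (i : ℕ) (S : Finset ℕ) : R :=
  if i ∈ S ∧ i + 1 ∈ S ∧ rankIn i S ∈ D then 0 else 1

variable {R D}

lemma hopCoeff_mul_self (i : ℕ) (S : Finset ℕ) :
    hopCoeff R D i S * hopCoeff R D i S = hopCoeff R D i S := by
  rw [hopCoeff]
  split_ifs <;> simp

lemma hopCoeff_congr {i j : ℕ} {S S' : Finset ℕ} (h₁ : i ∈ S ↔ j ∈ S')
    (h₂ : i + 1 ∈ S ↔ j + 1 ∈ S') (h₃ : rankIn i S = rankIn j S') :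
    hopCoeff R D i S = hopCoeff R D j S' := by
  simp only [hopCoeff, h₁, h₂, h₃]

lemma hopCoeff_of_not {i : ℕ} {S : Finset ℕ} (h : ¬(i ∈ S ∧ i + 1 ∈ S)) :
    hopCoeff R D i S = 1 :=
  if_neg fun h' => h ⟨h'.1, h'.2.1⟩

lemma hopCoeff_hop_of_far {i j : ℕ} (h : i + 1 < j ∨ j + 1 < i) (S : Finset ℕ) :
    hopCoeff R D i (hop j S) = hopCoeff R D i S :=
  hopCoeff_congr (mem_hop_of_ne (by omega) (by omega)) (mem_hop_of_ne (by omega) (by omega))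
    (rankIn_hop (by omega) S)

lemma hopCoeff_mul_hopCoeff_hop (i : ℕ) (S : Finset ℕ) :
    hopCoeff R D i S * hopCoeff R D i (hop i S) = hopCoeff R D i S := by
  by_cases h : i ∈ S ∧ i + 1 ∉ S
  · rw [hopCoeff_of_not (S := hop i S) (by simp [mem_hop_left, h]), mul_one]
  · rw [hop, if_neg h, hopCoeff_mul_self]

lemma hopCoeff_braid (i : ℕ) (S : Finset ℕ) :
    hopCoeff R D i S * hopCoeff R D (i + 1) (hop i S) * hopCoeff R D i (hop (i + 1) (hop i S)) =
      hopCoeff R D (i + 1) S * hopCoeff R D i (hop (i + 1) S) *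
        hopCoeff R D (i + 1) (hop i (hop (i + 1) S)) := by
  have h₀ : ∀ S, i ∈ hop (i + 1) S ↔ i ∈ S := fun S => mem_hop_of_ne (by omega) (by omega)
  have h₂ : ∀ S, i + 1 + 1 ∈ hop i S ↔ i + 1 + 1 ∈ S := fun S =>
    mem_hop_of_ne (by omega) (by omega)
  have h₃ : i + 1 ∈ S → hop i S = S := fun h => hop_of_not (by tauto)
  have h₄ : i + 1 + 1 ∈ S → hop (i + 1) S = S := fun h => hop_of_not (by tauto)
  by_cases ha : i ∈ S <;> by_cases hb : i + 1 ∈ S <;> by_cases hc : i + 1 + 1 ∈ S <;>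
    by_cases hr : rankIn i S ∈ D <;> by_cases hr' : rankIn (i + 1) S ∈ D <;>
    simp [hopCoeff, h₀, h₂, h₃, h₄, mem_hop_left, mem_hop_right, ha, hb, hc, hr, hr', rankIn_hop,
      rankIn_succ_of_notMem]

end HoppingModel

section ZeroHeckeAction

variable {R V V' : Type*} [CommSemiring R] [AddCommMonoid V] [Module R V] [AddCommMonoid V']
  [Module R V']

/-- The operators `T i`, for `1 ≤ i < m`, define an action of the 0-Hecke monoid algebra
`H_m(0)`; the values of `T` at other indices are irrelevant. -/
structure IsZeroHeckeAction (m : ℕ) (T : ℕ → V →ₗ[R] V) : Prop where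
  idem : ∀ i, 1 ≤ i → i + 1 ≤ m → ∀ x, T i (T i x) = T i x
  braid_succ : ∀ i, 1 ≤ i → i + 2 ≤ m → ∀ x,
    T i (T (i + 1) (T i x)) = T (i + 1) (T i (T (i + 1) x))
  comm_of_lt : ∀ i j, 1 ≤ i → i + 1 < j → j + 1 ≤ m → ∀ x, T i (T j x) = T j (T i x)

namespace IsZeroHeckeAction

variable {m i j : ℕ} {T : ℕ → V →ₗ[R] V} {T' : ℕ → V' →ₗ[R] V'}

lemma comm (hT : IsZeroHeckeAction m T) (hi : 1 ≤ i) (hj : 1 ≤ j) (him : i + 1 ≤ m)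
    (hjm : j + 1 ≤ m) (h : i + 1 < j ∨ j + 1 < i) (x : V) : T i (T j x) = T j (T i x) := by
  obtain h | h := h
  · exact hT.comm_of_lt i j hi h hjm x
  · exact (hT.comm_of_lt j i hj h him x).symm

lemma braid (hT : IsZeroHeckeAction m T) (hi : 1 ≤ i) (hj : 1 ≤ j) (him : i + 1 ≤ m)
    (hjm : j + 1 ≤ m) (h : i + 1 = j ∨ j + 1 = i) (x : V) :
    T i (T j (T i x)) = T j (T i (T j x)) := by
  obtain rfl | rfl := h
  · exact hT.braid_succ i hi hjm x
  · exact (hT.braid_succ j hj him x).symm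

lemma mono (hT : IsZeroHeckeAction m T) {l : ℕ} (h : l ≤ m) : IsZeroHeckeAction l T where
  idem i hi hil := hT.idem i hi (hil.trans h)
  braid_succ i hi hil := hT.braid_succ i hi (hil.trans h)
  comm_of_lt i j hi hij hjl := hT.comm_of_lt i j hi hij (hjl.trans h)

lemma of_injective (hT : IsZeroHeckeAction m T') {f : V →ₗ[R] V'} (hf : Function.Injective f)
    (hfT : ∀ i, i + 1 ≤ m → ∀ x, f (T i x) = T' i (f x)) : IsZeroHeckeAction m T where
  idem i hi him x := hf <| by simp only [hfT i him, hT.idem i hi him]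
  braid_succ i hi him x := hf <| by
    simp only [hfT i (by omega), hfT (i + 1) him, hT.braid_succ i hi him]
  comm_of_lt i j hi hij hjm x := hf <| by
    simp only [hfT i (by omega), hfT j hjm, hT.comm_of_lt i j hi hij hjm]

end IsZeroHeckeAction

end ZeroHeckeAction

section HopOperators

open Finset

variable (R : Type*) [CommSemiring R] (D : Finset ℕ)

/-- The operator by which `π_i` acts on the free module on the finite subsets of `ℕ`. -/
noncomputable def hopOp (i : ℕ) : (Finset ℕ →₀ R) →ₗ[R] (Finset ℕ →₀ R) :=
  Finsupp.linearCombination R fun S => Finsupp.single (hop i S) (hopCoeff R D i S)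

/-- The free module on the `n`-element subsets of `{1, …, m}`, that is, on the order-preserving
injections `[n] → [m]`. -/
def configModule (n m : ℕ) : Submodule R (Finset ℕ →₀ R) :=
  Finsupp.supported R R (powersetCard n (Icc 1 m))

variable {R D}

lemma hopOp_single (i : ℕ) (S : Finset ℕ) (r : R) :
    hopOp R D i (Finsupp.single S r) = Finsupp.single (hop i S) (r * hopCoeff R D i S) := by
  simp [hopOp]

lemma isZeroHeckeAction_hopOp (m : ℕ) : IsZeroHeckeAction m (hopOp R D) where
  idem i _ _ x := by
    suffices hopOp R D i ∘ₗ hopOp R D i = hopOp R D i from LinearMap.congr_fun this x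
    refine Finsupp.lhom_ext fun S r => ?_
    simp only [LinearMap.comp_apply, hopOp_single, hop_hop, mul_assoc, hopCoeff_mul_hopCoeff_hop]
  braid_succ i _ _ x := by
    suffices hopOp R D i ∘ₗ hopOp R D (i + 1) ∘ₗ hopOp R D i =
      hopOp R D (i + 1) ∘ₗ hopOp R D i ∘ₗ hopOp R D (i + 1) from LinearMap.congr_fun this x
    refine Finsupp.lhom_ext fun S r => ?_
    have hcoeff := hopCoeff_braid (R := R) (D := D) i S
    simp only [mul_assoc] at hcoeff
    simp only [LinearMap.comp_apply, hopOp_single, hop_braid i S, mul_assoc, hcoeff]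
  comm_of_lt i j _ hij _ x := by
    suffices hopOp R D i ∘ₗ hopOp R D j = hopOp R D j ∘ₗ hopOp R D i from
      LinearMap.congr_fun this x
    refine Finsupp.lhom_ext fun S r => ?_
    simp only [LinearMap.comp_apply, hopOp_single, hop_comm hij, hopCoeff_hop_of_far (.inl hij),
      hopCoeff_hop_of_far (.inr hij), mul_right_comm]

lemma hop_mem_powersetCard {n m i : ℕ} (him : i + 1 ≤ m) {S : Finset ℕ}
    (hS : S ∈ powersetCard n (Icc 1 m)) : hop i S ∈ powersetCard n (Icc 1 m) := by
  rw [mem_powersetCard] at hS ⊢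
  refine ⟨fun x hx => ?_, (card_hop i S).trans hS.2⟩
  obtain ⟨rfl, h, -⟩ | ⟨rfl, -⟩ | ⟨-, -, h⟩ := mem_hop.1 hx
  · exact hS.1 h
  · exact mem_Icc.2 ⟨by omega, him⟩
  · exact hS.1 h

lemma single_mem_configModule {n m : ℕ} {S : Finset ℕ} (hS : S ∈ powersetCard n (Icc 1 m))
    (r : R) : Finsupp.single S r ∈ configModule R n m :=
  Finsupp.single_mem_supported R r hS

lemma configModule_eq_span (n m : ℕ) : configModule R n m =
    Submodule.span R ((fun S => Finsupp.single S 1) '' powersetCard n (Icc 1 m)) :=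
  Finsupp.supported_eq_span_single R _

lemma configModule_mono (n : ℕ) : Monotone (configModule R n) := fun _ _ h =>
  Finsupp.supported_mono <| coe_subset.2 <| powersetCard_mono <| Icc_subset_Icc_right h

lemma eqOn_configModule {M : Type*} [AddCommMonoid M] [Module R M] {n m : ℕ}
    {F G : (Finset ℕ →₀ R) →ₗ[R] M}
    (h : ∀ S ∈ powersetCard n (Icc 1 m), F (Finsupp.single S 1) = G (Finsupp.single S 1)) :
    Set.EqOn F G (configModule R n m) := by
  rw [configModule_eq_span]
  exact LinearMap.eqOn_span (Set.forall_mem_image.2 h)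

lemma hopOp_mem_configModule {n m i : ℕ} (him : i + 1 ≤ m) :
    ∀ x ∈ configModule R n m, hopOp R D i x ∈ configModule R n m := by
  suffices configModule R n m ≤ (configModule R n m).comap (hopOp R D i) from this
  conv_lhs => rw [configModule_eq_span]
  refine Submodule.span_le.2 (Set.forall_mem_image.2 fun S hS => ?_)
  rw [SetLike.mem_coe, Submodule.mem_comap, hopOp_single]
  exact single_mem_configModule (hop_mem_powersetCard him hS) _

lemma hopOp_eq_self {n m j : ℕ} (hj : m + 1 ≤ j) {x : Finset ℕ →₀ R}
    (hx : x ∈ configModule R n m) : hopOp R D j x = x := by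
  refine eqOn_configModule (G := .id) (fun S hS => ?_) hx
  have hjS : j ∉ S := fun h => by
    have := mem_Icc.1 ((mem_powersetCard.1 hS).1 h)
    omega
  rw [hopOp_single, hop_of_not (by tauto), hopCoeff_of_not (by tauto), mul_one, LinearMap.id_apply]

end HopOperators

section Spread

open Finset

/-- The particle at `i + 1` may be moved back to the free site `i`. -/
def IsMovable (i : ℕ) (S : Finset ℕ) : Prop := 1 ≤ i ∧ i ∉ S ∧ i + 1 ∈ S

lemma adjSwap_adjSwap (i : ℕ) (S : Finset ℕ) : adjSwap i (adjSwap i S) = S := by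
  ext x
  simp [mem_adjSwap]

lemma adjSwap_comm {i j : ℕ} (h : i + 1 < j ∨ j + 1 < i) (S : Finset ℕ) :
    adjSwap i (adjSwap j S) = adjSwap j (adjSwap i S) := by
  ext x
  simp only [mem_adjSwap, Equiv.swap_apply_def]
  congr! 1
  split_ifs <;> omega

lemma adjSwap_subset_Icc {i m : ℕ} (hi : 1 ≤ i) (him : i + 1 ≤ m) {S : Finset ℕ}
    (hS : S ⊆ Icc 1 m) : adjSwap i S ⊆ Icc 1 m := by
  intro x hx
  have := mem_Icc.1 (hS (mem_adjSwap.1 hx))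
  rw [mem_Icc]
  rw [Equiv.swap_apply_def] at this
  split_ifs at this <;> omega

namespace IsMovable

variable {i j m : ℕ} {S : Finset ℕ}

lemma succ_le (h : IsMovable i S) (hS : S ⊆ Icc 1 m) : i + 1 ≤ m := (mem_Icc.1 (hS h.2.2)).2

lemma adjSwap_subset (h : IsMovable i S) (hS : S ⊆ Icc 1 m) : adjSwap i S ⊆ Icc 1 m :=
  adjSwap_subset_Icc h.1 (h.succ_le hS) hS

lemma sum_adjSwap_lt (h : IsMovable i S) : ∑ x ∈ adjSwap i S, x < ∑ x ∈ S, x := by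
  rw [adjSwap, sum_map]
  refine sum_lt_sum (fun x hx => ?_) ⟨i + 1, h.2.2, by simp⟩
  have : x ≠ i := ne_of_mem_of_not_mem hx h.2.1
  rw [Equiv.coe_toEmbedding, Equiv.swap_apply_def]
  split_ifs <;> omega

lemma adjSwap_of_far (hi : IsMovable i S) (hij : i + 1 < j ∨ j + 1 < i) :
    IsMovable i (adjSwap j S) :=
  ⟨hi.1, by rw [mem_adjSwap_of_ne (by omega) (by omega)]; exact hi.2.1,
    by rw [mem_adjSwap_of_ne (by omega) (by omega)]; exact hi.2.2⟩

lemma far_of_ne (hi : IsMovable i S) (hj : IsMovable j S) (hij : i ≠ j) :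
    i + 1 < j ∨ j + 1 < i := by
  have h₁ : i + 1 ≠ j := fun h => hj.2.1 (h ▸ hi.2.2)
  have h₂ : j + 1 ≠ i := fun h => hi.2.1 (h ▸ hj.2.2)
  omega

lemma adjSwap_of_adjacent (hj : IsMovable j S) (hi : 1 ≤ i) (hiS : i ∈ S ↔ i + 1 ∈ S)
    (hij : i + 1 = j ∨ j + 1 = i) : IsMovable i (adjSwap j S) := by
  obtain rfl | rfl := hij
  · exact ⟨hi, by rw [mem_adjSwap_of_ne (by omega) (by omega), hiS]; exact hj.2.1,
      mem_adjSwap_left.2 hj.2.2⟩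
  · exact ⟨hi, mem_adjSwap_right.not.2 hj.2.1,
      by rw [mem_adjSwap_of_ne (by omega) (by omega), ← hiS]; exact hj.2.2⟩

end IsMovable

lemma not_isMovable_Icc (i n : ℕ) : ¬IsMovable i (Icc 1 n) := by
  rintro ⟨hi, hi', hin⟩
  rw [mem_Icc] at hi' hin
  omega

lemma eq_Icc_of_forall_not_isMovable {S : Finset ℕ} (h₀ : 0 ∉ S) (h : ∀ i, ¬IsMovable i S) :
    S = Icc 1 #S := by
  have hdown : ∀ x ∈ S, Icc 1 x ⊆ S := fun x hx y hy =>
    Nat.decreasingInduction' (P := (· ∈ S))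
      (fun i _ hyi hi => by_contra fun hi' => h i ⟨(mem_Icc.1 hy).1.trans hyi, hi', hi⟩)
      (mem_Icc.1 hy).2 hx
  refine eq_of_subset_of_card_le (fun x hx => mem_Icc.2 ⟨?_, ?_⟩) (by simp)
  · exact Nat.one_le_iff_ne_zero.2 (ne_of_mem_of_not_mem hx h₀)
  · simpa using card_le_card (hdown x hx)

variable {R V V' : Type*} [CommSemiring R] [AddCommMonoid V] [Module R V] [AddCommMonoid V']
  [Module R V']

open scoped Classical in
/-- The vector of the configuration `S` in the module generated by `v`, the vector of
`{1, …, n}`: the particles are moved from `{1, …, n}` to `S` along any path of hops. -/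
noncomputable def spread (T : ℕ → V →ₗ[R] V) (v : V) (S : Finset ℕ) : V :=
  if h : ∃ i, IsMovable i S then T h.choose (spread T v (adjSwap h.choose S)) else v
termination_by ∑ x ∈ S, x
decreasing_by exact h.choose_spec.sum_adjSwap_lt

variable {m n : ℕ} {T : ℕ → V →ₗ[R] V} {T' : ℕ → V' →ₗ[R] V'} {v : V}

lemma spread_of_forall_not_isMovable {S : Finset ℕ} (h : ∀ i, ¬IsMovable i S) :
    spread T v S = v := by
  rw [spread, dif_neg (not_exists.2 h)]

lemma spread_Icc (n : ℕ) : spread T v (Icc 1 n) = v :=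
  spread_of_forall_not_isMovable fun _ => not_isMovable_Icc _ _

lemma exists_isMovable_spread_eq {S : Finset ℕ} (h : ∃ i, IsMovable i S) :
    ∃ i, IsMovable i S ∧ spread T v S = T i (spread T v (adjSwap i S)) :=
  ⟨h.choose, h.choose_spec, by rw [spread, dif_pos h]⟩

/-- Two different moves commute, so the choices made in `spread` are immaterial. -/
lemma IsMovable.apply_spread_adjSwap (hT : IsZeroHeckeAction m T) {i : ℕ} {S : Finset ℕ}
    (hS : S ⊆ Icc 1 m) (hi : IsMovable i S) : T i (spread T v (adjSwap i S)) = spread T v S := by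
  obtain ⟨j, hj, hjS⟩ := exists_isMovable_spread_eq (T := T) (v := v) ⟨i, hi⟩
  obtain rfl | hij := eq_or_ne i j
  · exact hjS.symm
  have hfar := hi.far_of_ne hj hij
  calc T i (spread T v (adjSwap i S))
      = T i (T j (spread T v (adjSwap j (adjSwap i S)))) := by
        rw [apply_spread_adjSwap hT (hi.adjSwap_subset hS) (hj.adjSwap_of_far hfar.symm)]
    _ = T j (T i (spread T v (adjSwap i (adjSwap j S)))) := by
        rw [hT.comm hi.1 hj.1 (hi.succ_le hS) (hj.succ_le hS) hfar, adjSwap_comm hfar]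
    _ = spread T v S := by
        rw [apply_spread_adjSwap hT (hj.adjSwap_subset hS) (hi.adjSwap_of_far hfar), hjS]
termination_by ∑ x ∈ S, x
decreasing_by exacts [hi.sum_adjSwap_lt, hj.sum_adjSwap_lt]

lemma map_spread (f : V →ₗ[R] V')
    (hf : ∀ i, 1 ≤ i → i + 1 ≤ m → ∀ x, f (T i x) = T' i (f x)) (hT' : IsZeroHeckeAction m T')
    {S : Finset ℕ} (hS : S ⊆ Icc 1 m) : f (spread T v S) = spread T' (f v) S := by
  by_cases h : ∃ i, IsMovable i S
  · obtain ⟨i, hi, hiS⟩ := exists_isMovable_spread_eq (T := T) (v := v) h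
    rw [hiS, hf i hi.1 (hi.succ_le hS), map_spread f hf hT' (hi.adjSwap_subset hS),
      hi.apply_spread_adjSwap hT' hS]
  · rw [not_exists] at h
    rw [spread_of_forall_not_isMovable h, spread_of_forall_not_isMovable h]
termination_by ∑ x ∈ S, x
decreasing_by exact hi.sum_adjSwap_lt

variable {D : Finset ℕ} {i : ℕ}

lemma rankIn_Icc (h : i ≤ n) : rankIn i (Icc 1 n) = i := by
  have : {x ∈ Icc 1 n | x ≤ i} = Icc 1 i := by
    ext x
    simp only [mem_filter, mem_Icc]
    omega
  simp [rankIn, this]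

lemma hopCoeff_Icc (hi : 1 ≤ i) (hin : i + 1 ≤ n) :
    hopCoeff R D i (Icc 1 n) = if i ∈ D then 0 else 1 := by
  have : i ≤ n := by omega
  simp [hopCoeff, rankIn_Icc, hi, hin, this]

lemma hopCoeff_adjSwap_of_far {j : ℕ} (h : i + 1 < j ∨ j + 1 < i) (S : Finset ℕ) :
    hopCoeff R D i (adjSwap j S) = hopCoeff R D i S :=
  hopCoeff_congr (mem_adjSwap_of_ne (by omega) (by omega))
    (mem_adjSwap_of_ne (by omega) (by omega)) (rankIn_adjSwap (by omega) S)

lemma mem_adjSwap_adjSwap {j : ℕ} {S : Finset ℕ} (hij : i + 1 = j ∨ j + 1 = i) :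
    (j ∈ adjSwap i (adjSwap j S) ↔ i ∈ S) ∧ (j + 1 ∈ adjSwap i (adjSwap j S) ↔ i + 1 ∈ S) := by
  obtain rfl | rfl := hij
  · rw [mem_adjSwap_right, mem_adjSwap_of_ne (by omega) (by omega),
      mem_adjSwap_of_ne (by omega) (by omega), mem_adjSwap_right]
    exact ⟨.rfl, .rfl⟩
  · rw [mem_adjSwap_of_ne (by omega) (by omega), mem_adjSwap_left, mem_adjSwap_left,
      mem_adjSwap_of_ne (by omega) (by omega)]
    exact ⟨.rfl, .rfl⟩

lemma hopCoeff_adjSwap_adjSwap {j : ℕ} {S : Finset ℕ} (hij : i + 1 = j ∨ j + 1 = i)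
    (hj : j ∉ S) :
    hopCoeff R D j (adjSwap i (adjSwap j S)) = hopCoeff R D i S := by
  obtain ⟨h₁, h₂⟩ := mem_adjSwap_adjSwap (S := S) hij
  by_cases hi : i ∈ S ∧ i + 1 ∈ S
  · obtain rfl | rfl := hij
    · exact absurd hi.2 hj
    have hj' : j + 1 ∉ adjSwap j S := mem_adjSwap_right.not.2 hj
    refine hopCoeff_congr h₁ h₂ ?_
    rw [rankIn_adjSwap (by omega), ← rankIn_succ_of_notMem hj', rankIn_adjSwap (by omega)]
  · rw [hopCoeff_of_not hi, hopCoeff_of_not (by tauto)]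

lemma apply_spread_of_mem_of_notMem (hT : IsZeroHeckeAction m T) {S : Finset ℕ}
    (hS : S ⊆ Icc 1 m) (hi : 1 ≤ i) (him : i + 1 ≤ m) (hiS : i ∈ S ∧ i + 1 ∉ S) :
    T i (spread T v S) = spread T v (hop i S) := by
  have hmov : IsMovable i (adjSwap i S) :=
    ⟨hi, mem_adjSwap_left.not.2 hiS.2, mem_adjSwap_right.2 hiS.1⟩
  rw [hop, if_pos hiS, ← hmov.apply_spread_adjSwap hT (adjSwap_subset_Icc hi him hS),
    adjSwap_adjSwap]

lemma IsMovable.apply_spread (hT : IsZeroHeckeAction m T) {S : Finset ℕ} (hS : S ⊆ Icc 1 m)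
    (hi : IsMovable i S) : T i (spread T v S) = spread T v S := by
  rw [← hi.apply_spread_adjSwap hT hS, hT.idem i hi.1 (hi.succ_le hS)]

lemma IsMovable.apply_spread_eq_smul_of_far (hT : IsZeroHeckeAction m T) {j : ℕ} {S : Finset ℕ}
    (hS : S ⊆ Icc 1 m) (hj : IsMovable j S) (hi : 1 ≤ i) (him : i + 1 ≤ m)
    (hij : i + 1 < j ∨ j + 1 < i) {c : R}
    (h : T i (spread T v (adjSwap j S)) = c • spread T v (adjSwap j S)) :
    T i (spread T v S) = c • spread T v S := by
  rw [← hj.apply_spread_adjSwap hT hS, hT.comm hi hj.1 him (hj.succ_le hS) hij, h, map_smul]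

lemma IsMovable.apply_spread_eq_smul_of_adjacent (hT : IsZeroHeckeAction m T) {j : ℕ}
    {S : Finset ℕ} (hS : S ⊆ Icc 1 m) (hj : IsMovable j S) (hi : IsMovable i (adjSwap j S))
    (hij : i + 1 = j ∨ j + 1 = i) {c : R}
    (h : T j (spread T v (adjSwap i (adjSwap j S))) = c • spread T v (adjSwap i (adjSwap j S))) :
    T i (spread T v S) = c • spread T v S := by
  have hSj := hj.adjSwap_subset hS
  rw [← hj.apply_spread_adjSwap hT hS, ← hi.apply_spread_adjSwap hT hSj,
    hT.braid hi.1 hj.1 (hi.succ_le hSj) (hj.succ_le hS) hij, h, map_smul, map_smul]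

lemma apply_spread_of_mem_iff (hT : IsZeroHeckeAction m T)
    (hv : ∀ i, 1 ≤ i → i + 1 ≤ m → i ≠ n → T i v = hopCoeff R D i (Icc 1 n) • v) {i : ℕ}
    {S : Finset ℕ} (hS : S ∈ powersetCard n (Icc 1 m)) (hi : 1 ≤ i) (him : i + 1 ≤ m)
    (hiS : i ∈ S ↔ i + 1 ∈ S) :
    T i (spread T v S) = hopCoeff R D i S • spread T v S := by
  obtain ⟨hSm, hSn⟩ := mem_powersetCard.1 hS
  by_cases h : ∃ j, IsMovable j S
  · obtain ⟨j, hj⟩ := h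
    have hSj := hj.adjSwap_subset hSm
    by_cases hfar : i + 1 < j ∨ j + 1 < i
    · refine hj.apply_spread_eq_smul_of_far hT hSm hi him hfar ?_
      rw [apply_spread_of_mem_iff hT hv (mem_powersetCard.2 ⟨hSj, (card_adjSwap j S).trans hSn⟩)
        hi him, hopCoeff_adjSwap_of_far hfar]
      rwa [mem_adjSwap_of_ne (by omega) (by omega), mem_adjSwap_of_ne (by omega) (by omega)]
    · have hne : i ≠ j := by
        rintro rfl
        exact hj.2.1 (hiS.2 hj.2.2)
      have hadj : i + 1 = j ∨ j + 1 = i := by omega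
      have hmov := hj.adjSwap_of_adjacent hi hiS hadj
      obtain ⟨h₁, h₂⟩ := mem_adjSwap_adjSwap (S := S) hadj
      refine hj.apply_spread_eq_smul_of_adjacent hT hSm hmov hadj ?_
      rw [apply_spread_of_mem_iff hT hv
        (mem_powersetCard.2 ⟨hmov.adjSwap_subset hSj, by rw [card_adjSwap, card_adjSwap, hSn]⟩)
        hj.1 (hj.succ_le hSm) (h₁.trans (hiS.trans h₂.symm)), hopCoeff_adjSwap_adjSwap hadj hj.2.1]
  · rw [not_exists] at h
    have hSI := eq_Icc_of_forall_not_isMovable (fun h₀ => by simpa using hSm h₀) h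
    rw [hSn] at hSI
    have hin : i ≠ n := by
      rintro rfl
      simp [hSI, hi] at hiS
    rw [spread_of_forall_not_isMovable h, hv i hi him hin, hSI]
termination_by ∑ x ∈ S, x
decreasing_by exacts [hj.sum_adjSwap_lt, hmov.sum_adjSwap_lt.trans hj.sum_adjSwap_lt]

theorem apply_spread (hT : IsZeroHeckeAction m T)
    (hv : ∀ i, 1 ≤ i → i + 1 ≤ m → i ≠ n → T i v = hopCoeff R D i (Icc 1 n) • v)
    {S : Finset ℕ} (hS : S ∈ powersetCard n (Icc 1 m)) (hi : 1 ≤ i) (him : i + 1 ≤ m) :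
    T i (spread T v S) = hopCoeff R D i S • spread T v (hop i S) := by
  have hSm := (mem_powersetCard.1 hS).1
  by_cases hiS : i ∈ S ∧ i + 1 ∉ S
  · rw [apply_spread_of_mem_of_notMem hT hSm hi him hiS, hopCoeff_of_not (by tauto), one_smul]
  rw [hop_of_not hiS]
  by_cases hmov : IsMovable i S
  · rw [hmov.apply_spread hT hSm, hopCoeff_of_not (fun h => hmov.2.1 h.1), one_smul]
  · have : ¬(i ∉ S ∧ i + 1 ∈ S) := fun h => hmov ⟨hi, h⟩
    exact apply_spread_of_mem_iff hT hv hS hi him (by tauto)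

end Spread

namespace HSeq

variable {X : HSeq k} {n m i : ℕ}

lemma transit_self (h : n ≤ n) (v : X.V n) : X.transit h v = v :=
  Nat.leRecOn_self (C := X.V) v

lemma transit_succ (h : n ≤ m) (h' : n ≤ m + 1) (v : X.V n) :
    X.transit h' v = X.φ m (X.transit h v) :=
  Nat.leRecOn_succ (C := X.V) h v

namespace IsHModule

lemma isZeroHeckeAction (hX : X.IsHModule) (m : ℕ) : IsZeroHeckeAction m (X.T m) where
  idem i hi him := LinearMap.congr_fun (hX.1 m i hi him)
  braid_succ i hi him := LinearMap.congr_fun (hX.2.1 m i hi him)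
  comm_of_lt i j hi hij hjm := LinearMap.congr_fun (hX.2.2.1 m i j hi hij hjm)

lemma T_φ (hX : X.IsHModule) (hi : 1 ≤ i) (him : i + 1 ≤ m) (x : X.V m) :
    X.T (m + 1) i (X.φ m x) = X.φ m (X.T m i x) :=
  LinearMap.congr_fun (hX.2.2.2.1 m i hi him) x

lemma T_transit_of_lt (hX : X.IsHModule) (h : n ≤ m) (hi : n + 1 ≤ i) (him : i + 1 ≤ m)
    (v : X.V n) : X.T m i (X.transit h v) = X.transit h v :=
  hX.2.2.2.2 n m h i hi him v

lemma T_transit_eq_hopCoeff_smul (hX : X.IsHModule) {D : Finset ℕ} {v : X.V n}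
    (hv : ∀ i, 1 ≤ i → i + 1 ≤ n → X.T n i v = (if i ∈ D then (0 : k) else 1) • v)
    (h : n ≤ m) (hi : 1 ≤ i) (him : i + 1 ≤ m) (hin : i ≠ n) :
    X.T m i (X.transit h v) = hopCoeff k D i (Finset.Icc 1 n) • X.transit h v := by
  obtain hlt | hlt := hin.lt_or_gt
  · induction m, h using Nat.le_induction with
    | base => rw [transit_self, hv i hi hlt, hopCoeff_Icc hi hlt]
    | succ m h ih =>
      have him' : i + 1 ≤ m := by omega
      rw [transit_succ h, hX.T_φ hi him', ih him', map_smul]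
  · rw [hX.T_transit_of_lt h hlt him, hopCoeff_of_not (by simp; omega), one_smul]

end IsHModule

end HSeq

section HopModel

open Finset

/-- The model of `M(α)` in which `M(α)_m` has as basis the `n`-element subsets of `{1, …, m}`,
with `D` the descent set of `α`. -/
noncomputable def hopModel (k : Type) [Field k] (D : Finset ℕ) (n : ℕ) : HSeq k where
  V m := configModule k n m
  T m i := if h : i + 1 ≤ m then (hopOp k D i).restrict (hopOp_mem_configModule h) else 0
  φ m := Submodule.inclusion (configModule_mono n m.le_succ)

namespace hopModel

variable {D : Finset ℕ} {n m i : ℕ}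

/-- The inclusion of the degree `m` part of the model into the free module on all finite subsets
of `ℕ`. -/
noncomputable def val (D : Finset ℕ) (n m : ℕ) : (hopModel k D n).V m →ₗ[k] (Finset ℕ →₀ k) :=
  (configModule k n m).subtype

lemma val_injective : Function.Injective (val (k := k) D n m) :=
  (configModule k n m).injective_subtype

lemma val_mem (x : (hopModel k D n).V m) : val D n m x ∈ configModule k n m := x.2

lemma val_T (him : i + 1 ≤ m) (x : (hopModel k D n).V m) :
    val D n m ((hopModel k D n).T m i x) = hopOp k D i (val D n m x) := by
  simp only [hopModel, dif_pos him]
  rfl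

lemma val_φ (x : (hopModel k D n).V m) :
    val D n (m + 1) ((hopModel k D n).φ m x) = val D n m x := rfl

lemma val_transit {l : ℕ} (h : l ≤ m) (x : (hopModel k D n).V l) :
    val D n m ((hopModel k D n).transit h x) = val D n l x := by
  induction m, h using Nat.le_induction with
  | base => rw [HSeq.transit_self]
  | succ m h ih => rw [← ih, HSeq.transit_succ h, val_φ]

theorem isHModule (D : Finset ℕ) (n : ℕ) : (hopModel k D n).IsHModule := by
  have hT (m : ℕ) : IsZeroHeckeAction m ((hopModel k D n).T m) :=
    (isZeroHeckeAction_hopOp m).of_injective val_injective fun _ => val_T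
  refine ⟨fun m i hi him => LinearMap.ext ((hT m).idem i hi him),
    fun m i hi him => LinearMap.ext ((hT m).braid_succ i hi him),
    fun m i j hi hij hjm => LinearMap.ext ((hT m).comm_of_lt i j hi hij hjm),
    fun m i _ him => LinearMap.ext fun x => val_injective ?_,
    fun l m h j hj hjm x => val_injective ?_⟩
  · simp only [LinearMap.comp_apply, val_φ, val_T him, val_T (Nat.le_succ_of_le him)]
  · rw [val_T hjm, val_transit, hopOp_eq_self hj (val_mem x)]

/-- The basis vector of the only configuration in degree `n`. -/
noncomputable def generator (k : Type) [Field k] (D : Finset ℕ) (n : ℕ) : (hopModel k D n).V n :=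
  (⟨Finsupp.single (Icc 1 n) 1, single_mem_configModule (by simp) 1⟩ : configModule k n n)

lemma val_generator : val D n n (generator k D n) = Finsupp.single (Icc 1 n) 1 := rfl

lemma T_generator (hi : 1 ≤ i) (hin : i + 1 ≤ n) :
    (hopModel k D n).T n i (generator k D n) =
      (if i ∈ D then (0 : k) else 1) • generator k D n := by
  refine val_injective ?_
  rw [val_T hin, map_smul, val_generator, hopOp_single, one_mul, hop_of_not (by simp; omega),
    hopCoeff_Icc hi hin, Finsupp.smul_single_one]

variable {X : HSeq k} {v : X.V n}

/-- The image of `v` in degree `m`; zero in degrees below that of `v`, where the model vanishes. -/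
noncomputable def baseVector (v : X.V n) (m : ℕ) : X.V m :=
  if h : n ≤ m then X.transit h v else 0

lemma baseVector_of_le (h : n ≤ m) : baseVector v m = X.transit h v := dif_pos h

/-- The morphism from the model to `X` that sends the generator to `v`. -/
noncomputable def lift (D : Finset ℕ) (v : X.V n) (m : ℕ) : (hopModel k D n).V m →ₗ[k] X.V m :=
  Finsupp.linearCombination k (spread (X.T m) (baseVector v m)) ∘ₗ val D n m

lemma lift_generator : lift D v n (generator k D n) = v := by
  rw [lift, LinearMap.comp_apply, val_generator, Finsupp.linearCombination_single, one_smul,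
    spread_Icc, baseVector_of_le le_rfl, HSeq.transit_self]

lemma le_of_mem_powersetCard_Icc {S : Finset ℕ} (hS : S ∈ powersetCard n (Icc 1 m)) : n ≤ m := by
  obtain ⟨hSm, rfl⟩ := mem_powersetCard.1 hS
  simpa using card_le_card hSm

lemma T_lift (hX : X.IsHModule)
    (hv : ∀ i, 1 ≤ i → i + 1 ≤ n → X.T n i v = (if i ∈ D then (0 : k) else 1) • v)
    (hi : 1 ≤ i) (him : i + 1 ≤ m) :
    X.T m i ∘ₗ lift D v m = lift D v m ∘ₗ (hopModel k D n).T m i := by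
  refine LinearMap.ext fun x => ?_
  simp only [LinearMap.comp_apply, lift, val_T him]
  refine eqOn_configModule (F := X.T m i ∘ₗ Finsupp.linearCombination k _)
    (G := Finsupp.linearCombination k _ ∘ₗ hopOp k D i) (fun S hS => ?_) (val_mem x)
  have hnm := le_of_mem_powersetCard_Icc hS
  simp only [LinearMap.comp_apply, hopOp_single, Finsupp.linearCombination_single, one_smul,
    one_mul]
  refine apply_spread (hX.isZeroHeckeAction m) (fun j hj hjm hjn => ?_) hS hi him
  rw [baseVector_of_le hnm, hX.T_transit_eq_hopCoeff_smul hv hnm hj hjm hjn]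

lemma φ_lift (hX : X.IsHModule) (m : ℕ) :
    X.φ m ∘ₗ lift D v m = lift D v (m + 1) ∘ₗ (hopModel k D n).φ m := by
  refine LinearMap.ext fun x => ?_
  simp only [LinearMap.comp_apply, lift, val_φ]
  refine eqOn_configModule (F := X.φ m ∘ₗ Finsupp.linearCombination k _) (fun S hS => ?_)
    (val_mem x)
  have hnm := le_of_mem_powersetCard_Icc hS
  simp only [LinearMap.comp_apply, Finsupp.linearCombination_single, one_smul]
  rw [map_spread (X.φ m) (fun i hi him x => (hX.T_φ hi him x).symm)
      ((hX.isZeroHeckeAction (m + 1)).mono m.le_succ) (mem_powersetCard.1 hS).1,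
    baseVector_of_le hnm, baseVector_of_le (hnm.trans m.le_succ), HSeq.transit_succ hnm]

end hopModel

theorem IsInducedModule.exists_embedding_configModule {n : ℕ} {α : Composition n} {X : HSeq k}
    {v : X.V n} (hX : IsInducedModule n α X v) : ∃ f : ∀ m, X.V m →ₗ[k] (Finset ℕ →₀ k),
      (∀ m, Function.Injective (f m)) ∧ (∀ m x, f m x ∈ configModule k n m) ∧
      (∀ m i, 1 ≤ i → i + 1 ≤ m → ∀ x,
        f m (X.T m i x) = hopOp k (compDescents α) i (f m x)) ∧
      ∀ m x, f (m + 1) (X.φ m x) = f m x := by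
  obtain ⟨hmod, hv, huniv⟩ := hX
  set D := compDescents α
  obtain ⟨f, ⟨hf₁, hf₂, hf₃⟩, -⟩ := huniv _ (hopModel.isHModule D n) (hopModel.generator k D n)
    fun i => hopModel.T_generator
  have hlift : (fun m => hopModel.lift D v m ∘ₗ f m) = fun _ => LinearMap.id := by
    refine (huniv X hmod v hv).unique ⟨?_, fun m i hi him => ?_, fun m => ?_⟩
      ⟨rfl, fun _ _ _ _ => rfl, fun _ => rfl⟩
    · rw [LinearMap.comp_apply, hf₁, hopModel.lift_generator]
    · rw [← LinearMap.comp_assoc, hopModel.T_lift hmod hv hi him, LinearMap.comp_assoc,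
        hf₂ m i hi him, LinearMap.comp_assoc]
    · rw [← LinearMap.comp_assoc, hopModel.φ_lift hmod, LinearMap.comp_assoc, hf₃,
        LinearMap.comp_assoc]
  have hinj (m : ℕ) : Function.Injective (f m) :=
    Function.LeftInverse.injective (g := hopModel.lift D v m) fun x =>
      LinearMap.congr_fun (congrFun hlift m) x
  refine ⟨fun m => hopModel.val D n m ∘ₗ f m, fun m => hopModel.val_injective.comp (hinj m),
    fun m x => hopModel.val_mem _, fun m i hi him x => ?_, fun m x => ?_⟩
  · have hfT := LinearMap.congr_fun (hf₂ m i hi him) x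
    simp only [LinearMap.comp_apply] at hfT ⊢
    rw [← hfT, hopModel.val_T him]
  · have hfφ := LinearMap.congr_fun (hf₃ m) x
    simp only [LinearMap.comp_apply] at hfφ ⊢
    rw [← hfφ, hopModel.val_φ]

end HopModel

section Insertion

open Finset

lemma mem_image_skip {p x : ℕ} {S : Finset ℕ} :
    x ∈ S.image (skip p) ↔ x < p ∧ x ∈ S ∨ p < x ∧ x - 1 ∈ S := by
  rw [mem_image]
  constructor
  · rintro ⟨y, hy, rfl⟩
    rw [skip]
    split_ifs with h
    · exact .inl ⟨h, hy⟩
    · exact .inr ⟨by omega, hy⟩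
  · rintro (⟨h, hx⟩ | ⟨h, hx⟩)
    · exact ⟨x, hx, if_pos h⟩
    · exact ⟨x - 1, hx, by rw [skip, if_neg (by omega)]; omega⟩

lemma image_skip_eq_self {p : ℕ} {S : Finset ℕ} (h : ∀ x ∈ S, x < p) : S.image (skip p) = S := by
  conv_rhs => rw [← image_id (s := S)]
  exact image_congr fun x hx => if_pos (h x hx)

lemma hop_image_skip (p : ℕ) (S : Finset ℕ) :
    hop p (S.image (skip (p + 1))) = S.image (skip p) := by
  ext x
  simp only [mem_hop, mem_image_skip]
  grind

variable {R : Type*} [CommSemiring R] {D : Finset ℕ} {n m p : ℕ}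

lemma hopOp_mapDomain_skip (p : ℕ) (v : Finset ℕ →₀ R) :
    hopOp R D p (v.mapDomain (image (skip (p + 1)))) = v.mapDomain (image (skip p)) := by
  suffices hopOp R D p ∘ₗ Finsupp.lmapDomain R R (image (skip (p + 1))) =
    Finsupp.lmapDomain R R (image (skip p)) from LinearMap.congr_fun this v
  refine Finsupp.lhom_ext fun S r => ?_
  have hp : p + 1 ∉ S.image (skip (p + 1)) := fun h => by
    have := mem_image_skip.1 h
    omega
  rw [LinearMap.comp_apply, Finsupp.lmapDomain_apply, Finsupp.lmapDomain_apply,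
    Finsupp.mapDomain_single, Finsupp.mapDomain_single, hopOp_single, hop_image_skip,
    hopCoeff_of_not fun h => hp h.2, mul_one]

lemma mapDomain_skip_succ_eq_self {v : Finset ℕ →₀ R} (hv : v ∈ configModule R n m) :
    v.mapDomain (image (skip (m + 1))) = v := by
  refine eqOn_configModule (F := Finsupp.lmapDomain R R (image (skip (m + 1)))) (G := .id)
    (fun S hS => ?_) hv
  rw [Finsupp.lmapDomain_apply, Finsupp.mapDomain_single, LinearMap.id_apply,
    image_skip_eq_self fun x hx =>
      Nat.lt_succ_of_le (mem_Icc.1 ((mem_powersetCard.1 hS).1 hx)).2]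

lemma mapDomain_skip_mem {Q : Submodule R (Finset ℕ →₀ R)}
    (hQ : ∀ i, 1 ≤ i → i + 1 ≤ m + 1 → ∀ v ∈ Q, hopOp R D i v ∈ Q) {v : Finset ℕ →₀ R}
    (hv : v ∈ configModule R n m) (hvQ : v ∈ Q) (hp : 1 ≤ p) (hpm : p ≤ m + 1) :
    v.mapDomain (image (skip p)) ∈ Q := by
  induction hpm using Nat.decreasingInduction with
  | self => rwa [mapDomain_skip_succ_eq_self hv]
  | of_succ i him ih =>
    rw [← hopOp_mapDomain_skip (D := D)]
    exact hQ i hp him _ (ih (by omega))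

lemma IsLeadingIndex.image_skip {K : Type*} [Field K] {P Q : Submodule K (Finset ℕ →₀ K)}
    (h : ∀ v ∈ P, v.mapDomain (image (skip p)) ∈ Q) {S : Finset ℕ}
    (hS : IsLeadingIndex toColex P S) : IsLeadingIndex toColex Q (S.image (skip p)) := by
  obtain ⟨v, hv, hvS, hlt⟩ := hS
  have hinj : Function.Injective (image (skip p)) := image_injective (skip_strictMono p).injective
  refine ⟨_, h v hv, by rwa [Finsupp.mapDomain_apply hinj], fun B hB => ?_⟩
  by_cases hr : B ∈ Set.range (image (skip p))
  · obtain ⟨B, rfl⟩ := hr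
    rw [Finsupp.mapDomain_apply hinj]
    exact hlt B ((Colex.toColex_image_lt_toColex_image (skip_strictMono p)).1 hB)
  · exact Finsupp.mapDomain_of_notMem_range _ _ hr

end Insertion

section LeadingGaps

open Finset Module

variable {K : Type*} [Field K] {n m : ℕ}

lemma finrank_configModule (n m : ℕ) : finrank K (configModule K n m) = m.choose n := by
  rw [configModule, (Finsupp.supportedEquivFinsupp _).finrank_eq, finrank_finsupp_self]
  simp only [coe_sort_coe, Fintype.card_coe, card_powersetCard, Nat.card_Icc, Nat.add_sub_cancel]

instance finiteDimensional_configModule : FiniteDimensional K (configModule K n m) :=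
  Module.Finite.equiv (Finsupp.supportedEquivFinsupp _).symm

/-- The gap vectors of the colexicographically leading sets of the modules `P m`, those of `P m`
being recorded in degree `m - n`. -/
def leadingGaps (n : ℕ) (P : ℕ → Submodule K (Finset ℕ →₀ K)) : Set (Fin (n + 1) → ℕ) :=
  {a | IsLeadingIndex toColex (P (∑ i, a i + n)) (gapSet a)}

variable {P : ℕ → Submodule K (Finset ℕ →₀ K)}

lemma isUpperSet_leadingGaps (hP : ∀ m, P m ≤ configModule K n m) (hmono : ∀ m, P m ≤ P (m + 1))
    {D : Finset ℕ} (hT : ∀ m i, 1 ≤ i → i + 1 ≤ m → ∀ v ∈ P m, hopOp K D i v ∈ P m) :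
    IsUpperSet (leadingGaps n P) := by
  refine isUpperSet_of_add_single_mem fun a ha j => ?_
  have hsum : ∑ i, (a + Pi.single j 1 : Fin (n + 1) → ℕ) i + n = ∑ i, a i + n + 1 := by
    simp only [Pi.add_apply, sum_add_distrib, Fintype.sum_pi_single']
    omega
  have hle : gapSum a j ≤ ∑ i, a i := gapSum_succ_last a ▸ gapSum_mono a j.2.le
  rw [leadingGaps, Set.mem_ofPred_eq, hsum, ← image_skip_gapSet]
  exact ha.image_skip fun v hv =>
    mapDomain_skip_mem (hT _) (hP _ hv) (hmono _ hv) (by omega) (by omega)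

lemma finrank_eq_degreeCount_leadingGaps (hP : ∀ m, P m ≤ configModule K n m) (d : ℕ) :
    finrank K (P (d + n)) = degreeCount (leadingGaps n P) d := by
  classical
  rw [finrank_eq_card_isLeadingIndex toColex.injective _ (hP (d + n)),
    ← image_gapSet_piAntidiag, filter_image,
    card_image_of_injOn ((gapSet_injOn d).mono (coe_subset.2 (filter_subset _ _))), degreeCount]
  congr 1
  refine filter_congr fun a ha => ?_
  rw [leadingGaps, Set.mem_ofPred_eq, (mem_piAntidiag.1 ha).1]

end LeadingGaps

section Growth

open Finset Module Filter Polynomial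

variable {n d m : ℕ} {α : Composition n} {X : HSeq k} {v : X.V n}
  {W : ∀ m, Submodule k (X.V m)}

namespace IsInducedModule

lemma finiteDimensional (hX : IsInducedModule n α X v) (m : ℕ) : FiniteDimensional k (X.V m) := by
  obtain ⟨f, hinj, hmem, -⟩ := hX.exists_embedding_configModule
  have : FiniteDimensional k (LinearMap.range (f m)) :=
    Submodule.finiteDimensional_of_le (Set.range_subset_iff.2 (hmem m))
  exact Module.Finite.equiv (LinearEquiv.ofInjective (f m) (hinj m)).symm

lemma finrank_le_choose (hX : IsInducedModule n α X v) (U : Submodule k (X.V m)) :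
    finrank k U ≤ m.choose n := by
  have := hX.finiteDimensional m
  obtain ⟨f, hinj, hmem, -⟩ := hX.exists_embedding_configModule
  rw [← finrank_configModule (K := k)]
  exact (Submodule.finrank_le U).trans <| LinearMap.finrank_le_finrank_of_injective
    (f := (f m).codRestrict _ (hmem m)) ((LinearMap.injective_codRestrict_iff _).2 (hinj m))

lemma finrank_ne_zero (hX : IsInducedModule n α X v) {U : Submodule k (X.V m)} (hU : U ≠ ⊥) :
    finrank k U ≠ 0 :=
  have := hX.finiteDimensional m
  mt Submodule.finrank_eq_zero.1 hU

lemma le_of_ne_bot (hX : IsInducedModule n α X v) {U : Submodule k (X.V m)} (hU : U ≠ ⊥) :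
    n ≤ m := by
  by_contra! h
  have := hX.finrank_le_choose U
  rw [Nat.choose_eq_zero_of_lt h] at this
  exact hX.finrank_ne_zero hU (Nat.le_zero.1 this)

lemma exists_isUpperSet_finrank_eq (hX : IsInducedModule n α X v) (hW : X.IsSub W) :
    ∃ U : Set (Fin (n + 1) → ℕ), IsUpperSet U ∧ ∀ e, finrank k (W (e + n)) = degreeCount U e := by
  obtain ⟨f, hinj, hmem, hT, hφ⟩ := hX.exists_embedding_configModule
  have hP (m : ℕ) : (W m).map (f m) ≤ configModule k n m :=
    Submodule.map_le_iff_le_comap.2 fun x _ => hmem m x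
  refine ⟨leadingGaps n fun m => (W m).map (f m),
    isUpperSet_leadingGaps hP (D := compDescents α) (fun m => ?_) (fun m i hi him => ?_),
    fun e => ?_⟩
  · rintro _ ⟨x, hx, rfl⟩
    exact ⟨X.φ m x, hW.2 m x hx, hφ m x⟩
  · rintro _ ⟨x, hx, rfl⟩
    exact ⟨X.T m i x, hW.1 m i hi him x hx, hT m i hi him x⟩
  · rw [← finrank_eq_degreeCount_leadingGaps hP]
    exact (Submodule.equivMapOfInjective (f _) (hinj _) (W _)).finrank_eq

open scoped Classical in
lemma choose_le_finrank (hX : IsInducedModule n α X v) (hW : X.IsSub W) (hd : W d ≠ ⊥)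
    (hdm : d ≤ m) : (m - d + n).choose n ≤ finrank k (W m) := by
  obtain ⟨U, hU, hcount⟩ := hX.exists_isUpperSet_finrank_eq hW
  obtain ⟨c, rfl⟩ := Nat.exists_eq_add_of_le' (hX.le_of_ne_bot hd)
  obtain ⟨e, rfl⟩ := Nat.exists_eq_add_of_le' ((Nat.le_add_left n c).trans hdm)
  have hne := hX.finrank_ne_zero hd
  rw [hcount, degreeCount, card_ne_zero] at hne
  obtain ⟨b, hb⟩ := hne
  obtain ⟨hbc, hbU⟩ := mem_filter.1 hb
  replace hbc : ∑ i, b i = c := (mem_piAntidiag.1 hbc).1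
  have hlow := multichoose_le_degreeCount hU hbU (D := e) (by omega)
  rwa [Fintype.card_fin, multichoose_succ_eq_choose, hbc, ← Nat.add_sub_add_right e n c,
    ← hcount] at hlow

lemma exists_polynomial_finrank (hX : IsInducedModule n α X v) (hW : X.IsSub W) :
    ∃ p : ℚ[X], ∀ᶠ m in atTop, (finrank k (W m) : ℚ) = p.eval (m : ℚ) := by
  obtain ⟨U, hU, hcount⟩ := hX.exists_isUpperSet_finrank_eq hW
  obtain ⟨p, hp⟩ := exists_polynomial_degreeCount hU
  refine ⟨p.comp (.X - .C (n : ℚ)), ?_⟩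
  filter_upwards [(tendsto_sub_atTop_nat n).eventually hp, eventually_ge_atTop n] with m hm hnm
  rw [eval_comp, eval_sub, eval_X, eval_C, ← Nat.cast_sub hnm, ← hm, ← hcount,
    Nat.sub_add_cancel hnm]

end IsInducedModule

end Growth

/-- If `V` is a `ℋ`-submodule of `M(α)`, `|α| = n`, whose first nonzero degree is `d`,
then `dim V_m ≥ C(m - d + n, n)` for all `m ≥ d`; consequently `dim V_m`, which is also
bounded above by `C(m, n)`, is eventually a polynomial of degree `n` in `m` with
leading coefficient `1/n!`. -/
theorem submodule_of_induced_growth (n : ℕ) (α : Composition n)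
    (X : HSeq k) (vα : X.V n) (hX : IsInducedModule n α X vα)
    (W : ∀ m, Submodule k (X.V m)) (hW : X.IsSub W)
    (d : ℕ) (hd : W d ≠ ⊥) (hd' : ∀ m < d, W m = ⊥) :
    (∀ m, d ≤ m →
      (m - d + n).choose n ≤ Module.finrank k (W m) ∧
      Module.finrank k (W m) ≤ m.choose n) ∧
    ∃ p : Polynomial ℚ, p.natDegree = n ∧
      p.leadingCoeff = 1 / (n.factorial : ℚ) ∧
      ∃ N, ∀ m, N ≤ m →
        (Module.finrank k (W m) : ℚ) = p.eval (m : ℚ) := by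
  have hlow (m : ℕ) (hm : d ≤ m) : (m - d + n).choose n ≤ Module.finrank k (W m) :=
    hX.choose_le_finrank hW hd hm
  have hupp (m : ℕ) : Module.finrank k (W m) ≤ m.choose n := hX.finrank_le_choose (W m)
  refine ⟨fun m hm => ⟨hlow m hm, hupp m⟩, ?_⟩
  obtain ⟨p, hp⟩ := hX.exists_polynomial_finrank hW
  obtain ⟨hdeg, hlead⟩ :
      p.natDegree = n ∧ p.leadingCoeff = 1 / (n.factorial : ℚ) := by
    refine natDegree_eq_and_leadingCoeff_eq_of_choose_le_of_le_choose (d := d) ?_ ?_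
    · filter_upwards [hp, Filter.eventually_ge_atTop d] with m hm hdm
      rw [← hm]
      exact_mod_cast hlow m hdm
    · filter_upwards [hp] with m hm
      rw [← hm]
      exact_mod_cast hupp m
  exact ⟨p, hdeg, hlead, Filter.eventually_atTop.1 hp⟩
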